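/- Let ℤ/2 act on the unit circle {z ∈ ℂ : |z| = 1} so that the nontrivial element acts by complex conjugation z ↦ z̄. For every integer k ≥ 2, the orbit configuration space F_{ℤ/2}(S¹, k) = {(x₁, …, x_k) ∈ (S¹)^k : for all i ≠ j, x_i ≠ x_j and x_i ≠ x̄_j}, equipped with the subspace topology of (S¹)^k, is homotopy equivalent to a discrete space with exactly k!·2^(k−2) points. -/

import Mathlib

/-!
Two points of the unit circle lie in different orbits of complex conjugation exactly when their
real parts differ. Hence sorting by real part identifies the orbit configuration space with
`k!` copies of the space of configurations whose real parts increase strictly. In such an ordered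
configuration only the first and the last point can be real, the first one only at `-1` and the
last one only at `1`. Moving the real parts linearly to equally spaced values in `[-1, 1]`, while
every point keeps the sign of its imaginary part, is therefore continuous: a point whose sign is
about to jump is stuck at `±1` throughout. What remains are the signs of the `k - 2` middle points.
-/

open Set Metric Function Topology

/-- The orbit configuration space `F_{ℤ/2}(S¹, k)` for complex conjugation on the unit circle. -/
abbrev ConjOrbitConfig (k : ℕ) : Type :=
  {x : Fin k → sphere (0 : ℂ) 1 //
    ∀ i j : Fin k, i ≠ j → (x i : ℂ) ≠ (x j : ℂ) ∧ (x i : ℂ) ≠ (starRingEnd ℂ) (x j : ℂ)}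

namespace ConjOrbitConfig

/-- Permutations carry the discrete topology, so that they can serve as labels of components. -/
local instance permTopology {k : ℕ} : TopologicalSpace (Equiv.Perm (Fin k)) := ⊥

local instance permDiscreteTopology {k : ℕ} : DiscreteTopology (Equiv.Perm (Fin k)) := ⟨rfl⟩

theorem sign_sq_eq_one {α R : Type*} [LinearOrder α] [Zero α] [Ring R] {a : α} (ha : a ≠ 0) :
    (SignType.sign a : R) ^ 2 = 1 := by
  rcases ha.lt_or_gt with h | h <;> simp [h]

theorem continuous_sign_mul {X α : Type*} [TopologicalSpace X] [LinearOrder α] [Zero α]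
    [TopologicalSpace α] [OrderTopology α] {f : X → α} {g : X → ℝ} (hf : Continuous f)
    (hg : Continuous g) (hfg : ∀ x, f x = 0 → g x = 0) :
    Continuous fun x => (SignType.sign (f x) : ℝ) * g x := by
  refine continuous_iff_continuousAt.2 fun x => ?_
  by_cases hx : f x = 0
  · have hgx : Filter.Tendsto (fun y => |g y|) (𝓝 x) (𝓝 0) := by
      simpa only [hfg x hx, abs_zero] using hg.abs.tendsto x
    have hbound : ∀ y, ‖(SignType.sign (f y) : ℝ) * g y‖ ≤ |g y| := fun y => by
      rcases SignType.sign (f y) <;> simp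
    simpa only [ContinuousAt, hx, sign_zero, SignType.coe_zero, zero_mul]
      using squeeze_zero_norm hbound hgx
  · have hsign : ContinuousAt (fun y => (SignType.sign (f y) : ℝ)) x :=
      (continuous_of_discreteTopology (f := ((↑) : SignType → ℝ))).continuousAt.comp
        ((continuousAt_sign_of_ne_zero hx).comp hf.continuousAt)
    exact hsign.mul hg.continuousAt

theorem continuous_decide_pos {X α : Type*} [TopologicalSpace X] [LinearOrder α] [Zero α]
    [TopologicalSpace α] [OrderClosedTopology α] {f : X → α} (hf : Continuous f)
    (hne : ∀ x, f x ≠ 0) : Continuous fun x => decide (0 < f x) := by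
  refine (continuous_bool_rng true).2 ⟨⟨?_⟩, ?_⟩
  · convert isOpen_lt hf (continuous_const (y := (0 : α))) using 1
    ext x
    simpa using (hne x).le_iff_lt
  · convert isOpen_lt (continuous_const (y := (0 : α))) hf using 1
    ext x
    simp

section Sorting

variable {k : ℕ} {α : Type*} [LinearOrder α]

theorem sort_eq_iff_strictMono_comp {f : Fin k → α} (hf : Injective f)
    {σ : Equiv.Perm (Fin k)} : Tuple.sort f = σ ↔ StrictMono (f ∘ σ) := by
  rw [eq_comm, Tuple.eq_sort_iff]
  constructor
  · exact fun h => h.1.strictMono_of_injective (hf.comp σ.injective)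
  · exact fun h => ⟨h.monotone, fun i j hij heq => absurd heq (h hij).ne⟩

theorem isOpen_setOf_strictMono {ι : Type*} [Finite ι] [Preorder ι] [TopologicalSpace α]
    [OrderClosedTopology α] : IsOpen {f : ι → α | StrictMono f} := by
  simp only [StrictMono, ofPred_forall]
  exact isOpen_iInter_of_finite fun i => isOpen_iInter_of_finite fun j =>
    isOpen_iInter_of_finite fun _ => isOpen_lt (continuous_apply i) (continuous_apply j)

theorem continuous_sort {X : Type*} [TopologicalSpace X] [TopologicalSpace α]
    [OrderClosedTopology α] {f : X → Fin k → α} (hf : Continuous f)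
    (hinj : ∀ x, Injective (f x)) : Continuous fun x => Tuple.sort (f x) := by
  refine continuous_discrete_rng.2 fun σ => ?_
  have hpre : (fun x => Tuple.sort (f x)) ⁻¹' {σ} = {x | StrictMono (f x ∘ σ)} :=
    Set.ext fun x => sort_eq_iff_strictMono_comp (hinj x)
  rw [hpre]
  exact isOpen_setOf_strictMono.preimage
    (continuous_pi fun i => (continuous_apply (σ i)).comp hf)

end Sorting

section RealParts

variable {k : ℕ}

theorem re_eq_re_iff_of_norm_eq {z w : ℂ} (h : ‖z‖ = ‖w‖) :
    z.re = w.re ↔ z = w ∨ z = starRingEnd ℂ w := by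
  constructor
  · intro hre
    have him : z.im ^ 2 = w.im ^ 2 := by
      have hsq := congrArg (· ^ 2) h
      simp only [Complex.sq_norm, Complex.normSq_apply, hre] at hsq
      linarith
    exact (sq_eq_sq_iff_eq_or_eq_neg.1 him).imp (Complex.ext hre) (Complex.ext hre)
  · rintro (rfl | rfl) <;> simp

/-- The real parts of a tuple of points of the unit circle. -/
def reTuple (x : Fin k → sphere (0 : ℂ) 1) : Fin k → ℝ := fun i => (x i : ℂ).re

theorem continuous_reTuple : Continuous (reTuple (k := k)) := by
  unfold reTuple
  fun_prop

theorem injective_reTuple_iff {x : Fin k → sphere (0 : ℂ) 1} :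
    Injective (reTuple x) ↔ ∀ i j : Fin k, i ≠ j →
      (x i : ℂ) ≠ (x j : ℂ) ∧ (x i : ℂ) ≠ (starRingEnd ℂ) (x j : ℂ) := by
  have hnorm (i j : Fin k) : ‖(x i : ℂ)‖ = ‖(x j : ℂ)‖ := by simp only [norm_eq_of_mem_sphere]
  have hre (i j : Fin k) := re_eq_re_iff_of_norm_eq (hnorm i j)
  simp only [Injective, reTuple, hre, ← not_or, not_imp_not, ne_eq]

/-- Ordered configurations: tuples of points of the unit circle whose real parts increase
strictly. They form one of the `k!` homeomorphic pieces of the orbit configuration space. -/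
abbrev Ordered (k : ℕ) : Type := {x : Fin k → sphere (0 : ℂ) 1 // StrictMono (reTuple x)}

/-- Sorting by real part: an orbit configuration amounts to the permutation listing its points
by increasing real part together with the resulting ordered configuration. -/
noncomputable def homeomorphPermProdOrdered (k : ℕ) :
    ConjOrbitConfig k ≃ₜ Equiv.Perm (Fin k) × Ordered k where
  toFun x := (Tuple.sort (reTuple x.1), ⟨x.1 ∘ Tuple.sort (reTuple x.1),
    (sort_eq_iff_strictMono_comp (injective_reTuple_iff.2 x.2)).1 rfl⟩)
  invFun p := ⟨p.2.1 ∘ p.1.symm,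
    injective_reTuple_iff.1 (p.2.2.injective.comp p.1.symm.injective)⟩
  left_inv x := Subtype.ext (by simp [comp_assoc])
  right_inv := by
    rintro ⟨σ, y, hy⟩
    have hsort : Tuple.sort (reTuple (y ∘ σ.symm)) = σ := by
      refine (sort_eq_iff_strictMono_comp (hy.injective.comp σ.symm.injective)).2 ?_
      change StrictMono ((reTuple y ∘ σ.symm) ∘ σ)
      rwa [comp_assoc, σ.symm_comp_self, comp_id]
    ext1
    · exact hsort
    · exact Subtype.ext (by simp [hsort, comp_assoc])
  continuous_toFun := by
    have hsort : Continuous fun x : ConjOrbitConfig k => Tuple.sort (reTuple x.1) :=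
      continuous_sort (continuous_reTuple.comp continuous_subtype_val)
        fun x => injective_reTuple_iff.2 x.2
    have happly (i : Fin k) :
        Continuous fun p : Equiv.Perm (Fin k) × ConjOrbitConfig k => p.2.1 (p.1 i) :=
      continuous_prod_of_discrete_left.2 fun σ =>
        (continuous_apply (σ i)).comp continuous_subtype_val
    exact hsort.prodMk <| Continuous.subtype_mk
      (continuous_pi fun i => (happly i).comp (hsort.prodMk continuous_id)) _
  continuous_invFun := by
    refine continuous_prod_of_discrete_left.2 fun σ => Continuous.subtype_mk ?_ _
    exact continuous_pi fun i => (continuous_apply (σ.symm i)).comp continuous_subtype_val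

end RealParts

section EquallySpaced

variable {n : ℕ} {u : Fin (n + 2) → ℝ}

theorem sq_lt_one_of_strictMono (hu : StrictMono u) (hI : ∀ p, u p ∈ Icc (-1) 1) (m : Fin n) :
    u m.castSucc.succ ^ 2 < 1 := by
  have hleft : u 0 < u m.castSucc.succ := hu (Fin.succ_pos _)
  have hright : u m.castSucc.succ < u (Fin.last (n + 1)) :=
    hu (Fin.succ_lt_succ_iff.2 (Fin.castSucc_lt_last m))
  rw [sq_lt_one_iff_abs_lt_one, abs_lt]
  exact ⟨(hI 0).1.trans_lt hleft, hright.trans_le (hI _).2⟩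

/-- The equally spaced real parts `-1 = h₀ < ⋯ < hₙ₊₁ = 1` of the model configurations. -/
noncomputable def stdRe (n : ℕ) (p : Fin (n + 2)) : ℝ := 2 * p / (n + 1) - 1

@[simp]
theorem stdRe_zero : stdRe n 0 = -1 := by simp [stdRe]

@[simp]
theorem stdRe_last : stdRe n (Fin.last (n + 1)) = 1 := by
  simp only [stdRe, Fin.val_last]
  push_cast
  field_simp
  norm_num

theorem strictMono_stdRe : StrictMono (stdRe n) := fun p q hpq => by
  unfold stdRe
  gcongr
  exact hpq

theorem stdRe_mem_Icc (p : Fin (n + 2)) : stdRe n p ∈ Icc (-1) 1 :=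
  ⟨stdRe_zero.symm.trans_le (strictMono_stdRe.monotone (Fin.zero_le p)),
    (strictMono_stdRe.monotone (Fin.le_last p)).trans_eq stdRe_last⟩

theorem eq_stdRe_of_sq_eq_one (hu : StrictMono u) (hI : ∀ p, u p ∈ Icc (-1) 1)
    {p : Fin (n + 2)} (hp : u p ^ 2 = 1) : u p = stdRe n p := by
  have hlt : u 0 < u (Fin.last (n + 1)) := hu (Fin.last_pos)
  cases p using Fin.cases with
  | zero =>
    rw [stdRe_zero]
    exact (sq_eq_one_iff.1 hp).resolve_left (hlt.trans_le (hI _).2).ne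
  | succ p =>
    cases p using Fin.lastCases with
    | last =>
      rw [Fin.succ_last, stdRe_last]
      exact (sq_eq_one_iff.1 hp).resolve_right ((hI 0).1.trans_lt hlt).ne'
    | cast m => exact absurd hp (sq_lt_one_of_strictMono hu hI m).ne

end EquallySpaced

theorem re_sq_add_im_sq (z : sphere (0 : ℂ) 1) : (z : ℂ).re ^ 2 + (z : ℂ).im ^ 2 = 1 := by
  rw [sq, sq, ← Complex.normSq_apply, ← Complex.sq_norm, norm_eq_of_mem_sphere, one_pow]

theorem re_mem_Icc (z : sphere (0 : ℂ) 1) : (z : ℂ).re ∈ Icc (-1) 1 :=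
  abs_le.1 ((Complex.abs_re_le_norm _).trans_eq (norm_eq_of_mem_sphere z))

/-- The point of the unit circle with real part `a` and imaginary part of sign `ε`. The sign is
arbitrary (in particular it may be `0`) when `a = ±1`. -/
noncomputable def circlePoint (a ε : ℝ) (ha : a ∈ Icc (-1) 1) (hε : a ^ 2 = 1 ∨ ε ^ 2 = 1) :
    sphere (0 : ℂ) 1 :=
  ⟨⟨a, ε * √(1 - a ^ 2)⟩, by
    have hsq : a ^ 2 ≤ 1 := (sq_le_one_iff_abs_le_one a).2 (abs_le.2 ha)
    have hone : a ^ 2 + (ε * √(1 - a ^ 2)) ^ 2 = 1 := by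
      rw [mul_pow, Real.sq_sqrt (sub_nonneg.2 hsq)]
      rcases hε with h | h <;> rw [h] <;> ring
    rw [mem_sphere_zero_iff_norm, Complex.norm_eq_sqrt_sq_add_sq, hone, Real.sqrt_one]⟩

theorem circlePoint_congr {a b ε δ : ℝ} {ha : a ∈ Icc (-1) 1} {hε : a ^ 2 = 1 ∨ ε ^ 2 = 1}
    {hb : b ∈ Icc (-1) 1} {hδ : b ^ 2 = 1 ∨ δ ^ 2 = 1} (hab : a = b)
    (hεδ : a ^ 2 ≠ 1 → ε = δ) : circlePoint a ε ha hε = circlePoint b δ hb hδ := by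
  subst hab
  by_cases hsq : a ^ 2 = 1
  · simp [circlePoint, hsq]
  · simp [circlePoint, hεδ hsq]

theorem circlePoint_re_sign_im (z : sphere (0 : ℂ) 1)
    (hε : (z : ℂ).re ^ 2 = 1 ∨ (SignType.sign (z : ℂ).im : ℝ) ^ 2 = 1) :
    circlePoint (z : ℂ).re (SignType.sign (z : ℂ).im) (re_mem_Icc z) hε = z := by
  have him : 1 - (z : ℂ).re ^ 2 = (z : ℂ).im ^ 2 := by linarith [re_sq_add_im_sq z]
  refine Subtype.ext (Complex.ext rfl ?_)
  calc
    (SignType.sign (z : ℂ).im : ℝ) * √(1 - (z : ℂ).re ^ 2) =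
        SignType.sign (z : ℂ).im * |(z : ℂ).im| := by rw [him, Real.sqrt_sq_eq_abs]
    _ = (z : ℂ).im := sign_mul_abs _

namespace Ordered

variable {n : ℕ}

theorem continuous_coe_apply {k : ℕ} (p : Fin k) :
    Continuous fun x : Ordered k => (x.1 p : ℂ) :=
  continuous_subtype_val.comp ((continuous_apply p).comp continuous_subtype_val)

theorem im_ne_zero (x : Ordered (n + 2)) (m : Fin n) : (x.1 m.castSucc.succ : ℂ).im ≠ 0 := by
  intro him
  have hlt : (x.1 m.castSucc.succ : ℂ).re ^ 2 < 1 :=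
    sq_lt_one_of_strictMono x.2 (fun p => re_mem_Icc (x.1 p)) m
  have hone := re_sq_add_im_sq (x.1 m.castSucc.succ)
  rw [him] at hone
  linarith

/-- The invariant separating the components: which of the middle points lie in the upper half
plane. -/
noncomputable def signs (x : Ordered (n + 2)) (m : Fin n) : Bool :=
  decide (0 < (x.1 m.castSucc.succ : ℂ).im)

theorem continuous_signs : Continuous (signs (n := n)) :=
  continuous_pi fun m => continuous_decide_pos
    (Complex.continuous_im.comp (continuous_coe_apply _)) fun x => im_ne_zero x m

/-- The real parts at time `t` of the deformation to the model configurations. -/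
noncomputable def reInterp (t : unitInterval) (x : Ordered (n + 2)) (p : Fin (n + 2)) : ℝ :=
  AffineMap.lineMap (reTuple x.1 p) (stdRe n p) (t : ℝ)

theorem strictMono_reInterp (t : unitInterval) (x : Ordered (n + 2)) : StrictMono (reInterp t x) :=
  fun _ _ hpq =>
    lineMap_strict_mono_endpoints (x.2 hpq) (strictMono_stdRe hpq) t.2.1 t.2.2

theorem reInterp_mem_Icc (t : unitInterval) (x : Ordered (n + 2)) (p : Fin (n + 2)) :
    reInterp t x p ∈ Icc (-1) 1 :=
  (convex_Icc (-1 : ℝ) 1).lineMap_mem (re_mem_Icc (x.1 p)) (stdRe_mem_Icc p) t.2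

theorem reInterp_sq_eq_one (t : unitInterval) (x : Ordered (n + 2)) {p : Fin (n + 2)}
    (him : (x.1 p : ℂ).im = 0) : reInterp t x p ^ 2 = 1 := by
  have hsq : reTuple x.1 p ^ 2 = 1 := by
    simpa only [reTuple, him, zero_pow two_ne_zero, add_zero] using re_sq_add_im_sq (x.1 p)
  rw [reInterp, ← eq_stdRe_of_sq_eq_one x.2 (fun q => re_mem_Icc (x.1 q)) hsq,
    AffineMap.lineMap_same_apply, hsq]

/-- The deformation of an ordered configuration that moves the real parts linearly to the
equally spaced ones and preserves the signs of the imaginary parts. -/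
noncomputable def deform (t : unitInterval) (x : Ordered (n + 2)) : Ordered (n + 2) :=
  ⟨fun p => circlePoint (reInterp t x p) (SignType.sign (x.1 p : ℂ).im) (reInterp_mem_Icc t x p)
    (or_iff_not_imp_right.2 fun h => reInterp_sq_eq_one t x (not_imp_comm.1 sign_sq_eq_one h)),
    strictMono_reInterp t x⟩

theorem continuous_deform :
    Continuous fun q : unitInterval × Ordered (n + 2) => deform q.1 q.2 := by
  refine Continuous.subtype_mk (continuous_pi fun p => Continuous.subtype_mk ?_ _) _
  have hcoe := (continuous_coe_apply p).comp
    (continuous_snd : Continuous (Prod.snd : unitInterval × Ordered (n + 2) → _))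
  have hre : Continuous fun q : unitInterval × Ordered (n + 2) => reInterp q.1 q.2 p :=
    (Complex.continuous_re.comp hcoe).lineMap continuous_const
      (continuous_subtype_val.comp continuous_fst)
  have him : Continuous fun q : unitInterval × Ordered (n + 2) =>
      (SignType.sign (q.2.1 p : ℂ).im : ℝ) * √(1 - reInterp q.1 q.2 p ^ 2) :=
    continuous_sign_mul (Complex.continuous_im.comp hcoe) (by fun_prop) fun q hq => by
      rw [reInterp_sq_eq_one q.1 q.2 hq, sub_self, Real.sqrt_zero]
  exact Complex.equivRealProdCLM.symm.continuous.comp (hre.prodMk him)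

theorem deform_zero (x : Ordered (n + 2)) : deform 0 x = x := by
  refine Subtype.ext (funext fun p => ?_)
  simp only [deform, reInterp, reTuple, Icc.coe_zero, AffineMap.lineMap_apply_zero]
  exact circlePoint_re_sign_im _ _

/-- The signs of the imaginary parts of a model configuration, whose end points are real. -/
def modelSign (ε : Fin n → Bool) : Fin (n + 2) → ℝ :=
  Fin.cons 0 (Fin.snoc (α := fun _ => ℝ) (fun m => if ε m then 1 else -1) 0)

theorem modelSign_castSucc_succ (ε : Fin n → Bool) (m : Fin n) :
    modelSign ε m.castSucc.succ = if ε m then 1 else -1 := by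
  rw [modelSign, Fin.cons_succ, Fin.snoc_castSucc]

theorem exists_eq_castSucc_succ {p : Fin (n + 2)} (hp : stdRe n p ^ 2 ≠ 1) :
    ∃ m : Fin n, p = m.castSucc.succ := by
  have h0 : p ≠ 0 := by rintro rfl; simp at hp
  obtain ⟨q, rfl⟩ := Fin.exists_succ_eq.2 h0
  have hlast : q ≠ Fin.last n := by rintro rfl; simp at hp
  obtain ⟨m, rfl⟩ := Fin.exists_castSucc_eq.2 hlast
  exact ⟨m, rfl⟩

theorem modelSign_sq (ε : Fin n → Bool) {p : Fin (n + 2)} (hp : stdRe n p ^ 2 ≠ 1) :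
    modelSign ε p ^ 2 = 1 := by
  obtain ⟨m, rfl⟩ := exists_eq_castSucc_succ hp
  rw [modelSign_castSucc_succ]
  split_ifs <;> norm_num

/-- The configuration with equally spaced real parts and prescribed signs of the imaginary
parts of the middle points. -/
noncomputable def model (ε : Fin n → Bool) : Ordered (n + 2) :=
  ⟨fun p => circlePoint (stdRe n p) (modelSign ε p) (stdRe_mem_Icc p)
    (or_iff_not_imp_left.2 (modelSign_sq ε)), strictMono_stdRe⟩

theorem deform_one (x : Ordered (n + 2)) : deform 1 x = model (signs x) := by
  refine Subtype.ext (funext fun p => ?_)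
  have hre : reInterp 1 x p = stdRe n p := AffineMap.lineMap_apply_one _ _
  simp only [deform, model]
  refine circlePoint_congr hre fun hp => ?_
  obtain ⟨m, rfl⟩ := exists_eq_castSucc_succ (hre ▸ hp)
  rw [modelSign_castSucc_succ, signs]
  rcases (im_ne_zero x m).lt_or_gt with him | him
  · simp [him, him.not_gt]
  · simp [him]

theorem signs_model (ε : Fin n → Bool) : signs (model ε) = ε := by
  funext m
  have hsqrt : 0 < √(1 - stdRe n m.castSucc.succ ^ 2) :=
    Real.sqrt_pos.2 (sub_pos.2 (sq_lt_one_of_strictMono strictMono_stdRe stdRe_mem_Icc m))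
  have him : 0 < modelSign ε m.castSucc.succ * √(1 - stdRe n m.castSucc.succ ^ 2) ↔ ε m := by
    rw [mul_pos_iff_of_pos_right hsqrt, modelSign_castSucc_succ]
    split_ifs with h <;> simp [h]
  exact Bool.eq_iff_iff.2 (decide_eq_true_iff.trans him)

/-- Up to homotopy an ordered configuration is determined by the signs of its middle points. -/
noncomputable def homotopyEquivSigns (n : ℕ) :
    ContinuousMap.HomotopyEquiv (Ordered (n + 2)) (Fin n → Bool) where
  toFun := ⟨signs, continuous_signs⟩
  invFun := ⟨model, continuous_of_discreteTopology⟩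
  left_inv := ContinuousMap.Homotopic.symm
    ⟨⟨⟨fun q => deform q.1 q.2, continuous_deform⟩, deform_zero, deform_one⟩⟩
  right_inv := by
    rw [show ContinuousMap.comp _ _ = ContinuousMap.id _ from ContinuousMap.ext signs_model]

end Ordered

/-- A sorting permutation and the signs of the middle points label the components. -/
noncomputable def homotopyEquivFin (n : ℕ) :
    ContinuousMap.HomotopyEquiv (ConjOrbitConfig (n + 2))
      (Fin (Nat.factorial (n + 2) * 2 ^ n)) :=
  have hcard : Fintype.card (Equiv.Perm (Fin (n + 2)) × (Fin n → Bool)) =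
      Nat.factorial (n + 2) * 2 ^ n := by
    simp [Fintype.card_perm]
  (homeomorphPermProdOrdered (n + 2)).toHomotopyEquiv.trans <|
    ((ContinuousMap.HomotopyEquiv.refl _).prodCongr (Ordered.homotopyEquivSigns n)).trans
      (Fintype.equivFinOfCardEq hcard).toHomeomorphOfDiscrete.toHomotopyEquiv

end ConjOrbitConfig

/-- The orbit configuration space `F_{ℤ/2}(S¹, k)`, where the nontrivial
element of `ℤ/2` acts on the unit circle in `ℂ` by complex conjugation, is homotopy
equivalent to a discrete space with exactly `k! * 2^(k-2)` points. -/
theorem orbit_config_circle_conj_homotopy_discrete (k : ℕ) (hk : 2 ≤ k) :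
    Nonempty
      (ContinuousMap.HomotopyEquiv
        {x : Fin k → Metric.sphere (0 : ℂ) 1 //
          ∀ i j : Fin k, i ≠ j →
            (x i : ℂ) ≠ (x j : ℂ) ∧ (x i : ℂ) ≠ (starRingEnd ℂ) (x j : ℂ)}
        (Fin (Nat.factorial k * 2 ^ (k - 2)))) := by
  obtain ⟨n, rfl⟩ := Nat.exists_eq_add_of_le' hk
  exact ⟨ConjOrbitConfig.homotopyEquivFin n⟩
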